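/- Let M ∈ ℂ^{p×p} be invertible and let A, B ∈ ℂ^{n×n×p} be *_M-pseudo-positive-definite. The tensor geometric mean A #_M B = A^{1/2} *_M (A^{−1/2} *_M B *_M A^{−1/2})^{1/2} *_M A^{1/2} satisfies: (i) idempotence: A #_M A = A; (ii) inversion order-reversing: (A #_M B)⁻¹ = B⁻¹ #_M A⁻¹; (iii) commutativity: A #_M B = B #_M A; (iv) congruence invariance: for every *_M-invertible C ∈ ℂ^{n×n×p}, (Cᴴ *_M A *_M C) #_M (Cᴴ *_M B *_M C) = Cᴴ *_M (A #_M B) *_M C; (v) joint homogeneity: for every real c > 0, (cA) #_M (cB) = c(A #_M B); (vi) consistency with scalars: for reals a, b > 0 and the *_M-identity tensor I, (aI) #_M (bI) = √(ab) I. -/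

import Mathlib

open Matrix
open scoped ComplexOrder

attribute [local instance] Classical.propDecidable

noncomputable section

/-- Mode-3 product of a third-order complex tensor (stack of `p` frontal slices)
with a matrix `M ∈ ℂ^{q×p}`: `(A ×₃ M)ₖ = Σ_l M k l • A l`. -/
def mode3 {m n p q : ℕ} (M : Matrix (Fin q) (Fin p) ℂ)
    (A : Fin p → Matrix (Fin m) (Fin n) ℂ) : Fin q → Matrix (Fin m) (Fin n) ℂ :=
  fun k => ∑ l, M k l • A l

/-- Face-wise product of two third-order tensors. -/
def facewise {m n s p : ℕ} (A : Fin p → Matrix (Fin m) (Fin n) ℂ)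
    (B : Fin p → Matrix (Fin n) (Fin s) ℂ) : Fin p → Matrix (Fin m) (Fin s) ℂ :=
  fun i => A i * B i

/-- Tensor-tensor multiplication with an invertible `M ∈ ℂ^{p×p}`:
`A *_M B = ((A ×₃ M) △ (B ×₃ M)) ×₃ M⁻¹`. -/
def tmul3 {m n s p : ℕ} (M : Matrix (Fin p) (Fin p) ℂ)
    (A : Fin p → Matrix (Fin m) (Fin n) ℂ) (B : Fin p → Matrix (Fin n) (Fin s) ℂ) :
    Fin p → Matrix (Fin m) (Fin s) ℂ :=
  mode3 M⁻¹ (facewise (mode3 M A) (mode3 M B))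

/-- `A ∈ ℂ^{n×n×p}` is `*_M`-pseudo-positive-definite if every frontal slice of
`A ×₃ M` is (Hermitian) positive-definite. -/
def PseudoPD {n p : ℕ} (M : Matrix (Fin p) (Fin p) ℂ)
    (A : Fin p → Matrix (Fin n) (Fin n) ℂ) : Prop :=
  ∀ i, (mode3 M A i).PosDef

/-- The `*_M`-identity tensor: all frontal slices of `I ×₃ M` equal `I_n`. -/
def tId {p : ℕ} (n : ℕ) (M : Matrix (Fin p) (Fin p) ℂ) :
    Fin p → Matrix (Fin n) (Fin n) ℂ :=
  mode3 M⁻¹ (fun _ => 1)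

/-- The `*_M`-inverse of a tensor (the unique two-sided inverse when it exists). -/
def tinv {n p : ℕ} (M : Matrix (Fin p) (Fin p) ℂ)
    (A : Fin p → Matrix (Fin n) (Fin n) ℂ) : Fin p → Matrix (Fin n) (Fin n) ℂ :=
  if h : ∃ X, tmul3 M A X = tId n M ∧ tmul3 M X A = tId n M then h.choose else 0

/-- The `*_M`-pseudo-positive-definite square root of a tensor (the unique
pseudo-positive-definite `B` with `B *_M B = A`, when it uniquely exists). -/
def tsqrt {n p : ℕ} (M : Matrix (Fin p) (Fin p) ℂ)
    (A : Fin p → Matrix (Fin n) (Fin n) ℂ) : Fin p → Matrix (Fin n) (Fin n) ℂ :=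
  if h : ∃! B, PseudoPD M B ∧ tmul3 M B B = A then h.choose else 0

/-- The tensor geometric mean
`A #_M B = A^{1/2} *_M (A^{−1/2} *_M B *_M A^{−1/2})^{1/2} *_M A^{1/2}`,
where `A^{−1/2} = (A^{1/2})⁻¹`. -/
def geomean {n p : ℕ} (M : Matrix (Fin p) (Fin p) ℂ)
    (A B : Fin p → Matrix (Fin n) (Fin n) ℂ) : Fin p → Matrix (Fin n) (Fin n) ℂ :=
  tmul3 M (tmul3 M (tsqrt M A)
    (tsqrt M (tmul3 M (tmul3 M (tinv M (tsqrt M A)) B) (tinv M (tsqrt M A)))))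
    (tsqrt M A)

end

/-- The `*_M`-conjugate-transpose: `(Cᴴ ×₃ M)⁽ⁱ⁾ = ((C ×₃ M)⁽ⁱ⁾)ᴴ`. -/
noncomputable def tconjT {n p : ℕ} (M : Matrix (Fin p) (Fin p) ℂ)
    (C : Fin p → Matrix (Fin n) (Fin n) ℂ) : Fin p → Matrix (Fin n) (Fin n) ℂ :=
  mode3 M⁻¹ (fun i => (mode3 M C i)ᴴ)

/-!
For strictly positive elements `a`, `b` of a C⋆-algebra, `a # b` is the unique nonnegative solution
`g` of the Riccati equation `g * a⁻¹ * g = b`. Each property of the mean is the verification of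
such an equation, or follows from the behaviour of square roots under inversion. Since `×₃ M` turns
`*_M` into the slicewise matrix product, the slices of `(A #_M B) ×₃ M` are the geometric means of
the slices of `A ×₃ M` and `B ×₃ M`, and the tensor identities hold because they hold slice by
slice.
-/

section RingInverse

open scoped Ring

theorem ringInverse_smul {𝕜 R : Type*} [Field 𝕜] [Ring R] [Algebra 𝕜 R] (c : 𝕜) (a : R) :
    (c • a)⁻¹ʳ = c⁻¹ • a⁻¹ʳ := by
  obtain rfl | hc := eq_or_ne c 0
  · simp
  have hinv : (algebraMap 𝕜 R c)⁻¹ʳ = algebraMap 𝕜 R c⁻¹ :=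
    Ring.inverse_unit (Units.map (algebraMap 𝕜 R).toMonoidHom (Units.mk0 c hc))
  rw [Algebra.smul_def, Ring.inverse_mul (.inl (hc.isUnit.map (algebraMap 𝕜 R))), hinv,
    Algebra.smul_def, Algebra.commutes]

variable {M₀ : Type*} [MonoidWithZero M₀]

theorem riccati_symm {a b g : M₀} (ha : IsUnit a) (hg : IsUnit g) (h : g * a⁻¹ʳ * g = b) :
    g * b⁻¹ʳ * g = a := by
  rw [← h, Ring.inverse_mul (.inr hg), Ring.inverse_mul (.inl hg), Ring.inverse_inverse ha,
    Ring.mul_inverse_cancel_left g _ hg, Ring.inverse_mul_cancel_right g _ hg]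

theorem riccati_conjugate {a b c d g : M₀} (hc : IsUnit c) (hd : IsUnit d)
    (h : g * a⁻¹ʳ * g = b) : d * g * c * (d * a * c)⁻¹ʳ * (d * g * c) = d * b * c := by
  rw [← h, Ring.inverse_mul (.inr hc), Ring.inverse_mul (.inl hd)]
  simp only [mul_assoc, Ring.mul_inverse_cancel_left c _ hc, Ring.inverse_mul_cancel_left d _ hd]

end RingInverse

section GeometricMean

open CFC Ring

variable {R : Type*} [PartialOrder R] [Ring R] [StarRing R] [TopologicalSpace R]
  [StarOrderedRing R] [Algebra ℝ R] [ContinuousFunctionalCalculus ℝ R IsSelfAdjoint]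
  [NonnegSpectrumClass ℝ R] [IsSemitopologicalRing R]

theorem conjSqrt_nonneg (a : R) {x : R} (hx : 0 ≤ x) : 0 ≤ conjSqrt a x := by
  simpa only [map_zero] using conjSqrt_monotone (c := a) hx

/-- The geometric mean `a # b = a^{1/2} (a^{-1/2} b a^{-1/2})^{1/2} a^{1/2}` of strictly positive
elements of a C⋆-algebra; for other arguments the value is not meaningful. -/
noncomputable def geometricMean (a b : R) : R :=
  conjSqrt a (sqrt (conjSqrt a⁻¹ʳ b))

theorem geometricMean_nonneg (a b : R) : 0 ≤ geometricMean a b :=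
  conjSqrt_nonneg a (sqrt_nonneg _)

variable [T2Space R] {a b : R}

theorem conjSqrt_mul_ringInverse_mul_conjSqrt (ha : IsStrictlyPositive a) (x : R) :
    conjSqrt a x * a⁻¹ʳ * conjSqrt a x = conjSqrt a (x * x) := by
  have hone : sqrt a * a⁻¹ʳ * sqrt a = 1 := by
    have := conjSqrt_ringInverse_self a⁻¹ʳ ha.ringInverse
    rwa [inverse_inverse ha.isUnit, conjSqrt_apply] at this
  calc conjSqrt a x * a⁻¹ʳ * conjSqrt a x
      = sqrt a * x * (sqrt a * a⁻¹ʳ * sqrt a) * (x * sqrt a) := by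
        simp only [conjSqrt_apply, mul_assoc]
    _ = conjSqrt a (x * x) := by rw [hone, mul_one, conjSqrt_apply]; simp only [mul_assoc]

theorem geometricMean_mul_ringInverse_mul_self (ha : IsStrictlyPositive a) (hb : 0 ≤ b) :
    geometricMean a b * a⁻¹ʳ * geometricMean a b = b := by
  rw [geometricMean, conjSqrt_mul_ringInverse_mul_conjSqrt ha,
    sqrt_mul_sqrt_self _ (conjSqrt_nonneg _ hb), conjSqrt_conjSqrt_ringInverse a b ha]

theorem geometricMean_eq_of_riccati {g : R} (ha : IsStrictlyPositive a) (hg : 0 ≤ g)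
    (h : g * a⁻¹ʳ * g = b) : geometricMean a b = g := by
  set x := conjSqrt a⁻¹ʳ g
  have hgx : conjSqrt a x = g := conjSqrt_conjSqrt_ringInverse a g ha
  have hb : conjSqrt a⁻¹ʳ b = x * x := by
    rw [← h, ← hgx, conjSqrt_mul_ringInverse_mul_conjSqrt ha,
      conjSqrt_ringInverse_conjSqrt a _ ha]
  rw [geometricMean, hb, sqrt_mul_self x (conjSqrt_nonneg _ hg), hgx]

theorem isStrictlyPositive_geometricMean (ha : IsStrictlyPositive a)
    (hb : IsStrictlyPositive b) : IsStrictlyPositive (geometricMean a b) := by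
  have hab : IsStrictlyPositive (conjSqrt a⁻¹ʳ b) :=
    (isStrictlyPositive_conjSqrt_iff _ b ha.ringInverse).2 hb
  exact (isStrictlyPositive_conjSqrt_iff a _ ha).2 (IsStrictlyPositive.sqrt _ hab)

theorem geometricMean_self (ha : IsStrictlyPositive a) : geometricMean a a = a :=
  geometricMean_eq_of_riccati ha ha.nonneg <| by rw [mul_inverse_cancel a ha.isUnit, one_mul]

theorem geometricMean_comm (ha : IsStrictlyPositive a) (hb : IsStrictlyPositive b) :
    geometricMean a b = geometricMean b a :=
  have hab := isStrictlyPositive_geometricMean ha hb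
  (geometricMean_eq_of_riccati hb hab.nonneg <| riccati_symm ha.isUnit hab.isUnit <|
    geometricMean_mul_ringInverse_mul_self ha hb.nonneg).symm

theorem ringInverse_geometricMean (ha : IsStrictlyPositive a) (b : R) :
    (geometricMean a b)⁻¹ʳ = geometricMean a⁻¹ʳ b⁻¹ʳ := by
  rw [geometricMean, geometricMean, ringInverse_conjSqrt a _ ha, ← sqrt_ringInverse,
    ringInverse_conjSqrt _ b ha.ringInverse]

theorem geometricMean_star_conjugate {c : R} (ha : IsStrictlyPositive a) (hb : 0 ≤ b)
    (hc : IsUnit c) :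
    geometricMean (star c * a * c) (star c * b * c) = star c * geometricMean a b * c :=
  geometricMean_eq_of_riccati (hc.isStrictlyPositive_star_left_conjugate_iff.2 ha)
    (star_left_conjugate_nonneg (geometricMean_nonneg a b) c) <|
    riccati_conjugate hc hc.star <| geometricMean_mul_ringInverse_mul_self ha hb

theorem geometricMean_smul_smul [PosSMulMono ℝ R] (ha : IsStrictlyPositive a) (hb : 0 ≤ b)
    {r s : ℝ} (hr : 0 < r) (hs : 0 ≤ s) :
    geometricMean (r • a) (s • b) = √(r * s) • geometricMean a b := by
  have hcoeff : √(r * s) * r⁻¹ * √(r * s) = s := by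
    rw [mul_right_comm, Real.mul_self_sqrt (mul_nonneg hr.le hs), mul_comm r,
      mul_inv_cancel_right₀ hr.ne']
  refine geometricMean_eq_of_riccati (ha.smul hr)
    (smul_nonneg (Real.sqrt_nonneg _) (geometricMean_nonneg a b)) ?_
  rw [ringInverse_smul, smul_mul_smul_comm, smul_mul_smul_comm, hcoeff,
    geometricMean_mul_ringInverse_mul_self ha hb]

end GeometricMean

section Transform

variable {m n p q r s : ℕ}

theorem mode3_mode3 (M : Matrix (Fin r) (Fin q) ℂ) (N : Matrix (Fin q) (Fin p) ℂ)
    (A : Fin p → Matrix (Fin m) (Fin n) ℂ) : mode3 M (mode3 N A) = mode3 (M * N) A := by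
  funext k
  simp only [mode3, Matrix.mul_apply, Finset.smul_sum, Finset.sum_smul, mul_smul]
  exact Finset.sum_comm

theorem mode3_one (A : Fin p → Matrix (Fin m) (Fin n) ℂ) : mode3 1 A = A := by
  funext k
  simp [mode3, Matrix.one_apply]

theorem mode3_smul (M : Matrix (Fin q) (Fin p) ℂ) (c : ℂ)
    (A : Fin p → Matrix (Fin m) (Fin n) ℂ) (i : Fin q) :
    mode3 M (c • A) i = c • mode3 M A i := by
  simp only [mode3, Pi.smul_apply, Finset.smul_sum, smul_comm c]

variable {M : Matrix (Fin p) (Fin p) ℂ} (hM : IsUnit M.det)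

include hM

theorem mode3_mode3_inv (A : Fin p → Matrix (Fin m) (Fin n) ℂ) :
    mode3 M (mode3 M⁻¹ A) = A := by
  rw [mode3_mode3, Matrix.mul_nonsing_inv M hM, mode3_one]

theorem mode3_injective :
    Function.Injective (mode3 M : (Fin p → Matrix (Fin m) (Fin n) ℂ) → _) :=
  Function.LeftInverse.injective (g := mode3 M⁻¹) fun A => by
    rw [mode3_mode3, Matrix.nonsing_inv_mul M hM, mode3_one]

theorem mode3_tmul3 (A : Fin p → Matrix (Fin m) (Fin n) ℂ)
    (B : Fin p → Matrix (Fin n) (Fin s) ℂ) (i : Fin p) :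
    mode3 M (tmul3 M A B) i = mode3 M A i * mode3 M B i := by
  rw [tmul3, mode3_mode3_inv hM, facewise]

theorem mode3_tId (i : Fin p) : mode3 M (tId n M) i = 1 := by
  rw [tId, mode3_mode3_inv hM]

theorem mode3_tconjT (C : Fin p → Matrix (Fin n) (Fin n) ℂ) (i : Fin p) :
    mode3 M (tconjT M C) i = star (mode3 M C i) := by
  rw [tconjT, mode3_mode3_inv hM, Matrix.star_eq_conjTranspose]

end Transform

section Slices

open CFC
open scoped MatrixOrder Ring

variable {n p : ℕ} {M : Matrix (Fin p) (Fin p) ℂ} {A B : Fin p → Matrix (Fin n) (Fin n) ℂ}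

theorem pseudoPD_iff_isStrictlyPositive :
    PseudoPD M A ↔ ∀ i, IsStrictlyPositive (mode3 M A i) :=
  forall_congr' fun _ => Matrix.isStrictlyPositive_iff_posDef.symm

theorem PseudoPD.isStrictlyPositive (hA : PseudoPD M A) (i : Fin p) :
    IsStrictlyPositive (mode3 M A i) :=
  pseudoPD_iff_isStrictlyPositive.1 hA i

theorem PseudoPD.isUnit_mode3 (hA : PseudoPD M A) (i : Fin p) : IsUnit (mode3 M A i) :=
  (hA i).isUnit

theorem PseudoPD.smul (hA : PseudoPD M A) {c : ℝ} (hc : 0 < c) : PseudoPD M ((c : ℂ) • A) :=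
  fun i => by
    rw [mode3_smul]
    exact (hA i).smul (Complex.zero_lt_real.2 hc)

variable (hM : IsUnit M.det)

include hM

theorem pseudoPD_tId : PseudoPD M (tId n M) := fun i => by
  rw [mode3_tId hM]
  exact Matrix.PosDef.one

theorem exists_tmul3_inverse_iff :
    (∃ X, tmul3 M A X = tId n M ∧ tmul3 M X A = tId n M) ↔ ∀ i, IsUnit (mode3 M A i) := by
  have hslice (X Y : Fin p → Matrix (Fin n) (Fin n) ℂ) :
      tmul3 M X Y = tId n M ↔ ∀ i, mode3 M X i * mode3 M Y i = 1 := by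
    rw [← (mode3_injective hM).eq_iff, funext_iff]
    simp only [mode3_tmul3 hM, mode3_tId hM]
  simp only [hslice]
  constructor
  · rintro ⟨X, hAX, hXA⟩ i
    exact isUnit_iff_exists.2 ⟨_, hAX i, hXA i⟩
  · intro hA
    refine ⟨mode3 M⁻¹ fun i => (mode3 M A i)⁻¹ʳ, fun i => ?_, fun i => ?_⟩ <;>
      rw [mode3_mode3_inv hM]
    exacts [Ring.mul_inverse_cancel _ (hA i), Ring.inverse_mul_cancel _ (hA i)]

theorem mode3_tinv (hA : ∀ i, IsUnit (mode3 M A i)) (i : Fin p) :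
    mode3 M (tinv M A) i = (mode3 M A i)⁻¹ʳ := by
  have hex := (exists_tmul3_inverse_iff hM).2 hA
  have hmul := congrFun (congrArg (mode3 M) hex.choose_spec.1) i
  rw [mode3_tmul3 hM, mode3_tId hM] at hmul
  rw [tinv, dif_pos hex, ← Ring.inverse_mul_cancel_left _ (mode3 M hex.choose i) (hA i), hmul,
    mul_one]

theorem PseudoPD.tinv (hA : PseudoPD M A) : PseudoPD M (tinv M A) :=
  pseudoPD_iff_isStrictlyPositive.2 fun i => by
    rw [mode3_tinv hM hA.isUnit_mode3]
    exact (hA.isStrictlyPositive i).ringInverse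

theorem pseudoPD_and_tmul3_self_eq_iff (hA : PseudoPD M A) (S : Fin p → Matrix (Fin n) (Fin n) ℂ) :
    PseudoPD M S ∧ tmul3 M S S = A ↔ mode3 M S = fun i => sqrt (mode3 M A i) := by
  constructor
  · rintro ⟨hS, rfl⟩
    funext i
    rw [mode3_tmul3 hM, sqrt_mul_self _ (hS.isStrictlyPositive i).nonneg]
  · intro hS
    refine ⟨pseudoPD_iff_isStrictlyPositive.2 fun i => ?_, mode3_injective hM (funext fun i => ?_)⟩
    · rw [hS]
      exact (hA.isStrictlyPositive i).sqrt
    · rw [mode3_tmul3 hM, hS, sqrt_mul_sqrt_self _ (hA.isStrictlyPositive i).nonneg]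

theorem mode3_tsqrt (hA : PseudoPD M A) (i : Fin p) :
    mode3 M (tsqrt M A) i = sqrt (mode3 M A i) := by
  have hiff := pseudoPD_and_tmul3_self_eq_iff hM hA
  have hex : ∃! S, PseudoPD M S ∧ tmul3 M S S = A := by
    simp only [hiff]
    exact ⟨_, mode3_mode3_inv hM _, fun S hS => mode3_injective hM (by rw [hS, mode3_mode3_inv hM])⟩
  rw [tsqrt, dif_pos hex, (hiff _).1 hex.choose_spec.1]

theorem mode3_geomean (hA : PseudoPD M A) (hB : PseudoPD M B) (i : Fin p) :
    mode3 M (geomean M A B) i = geometricMean (mode3 M A i) (mode3 M B i) := by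
  set S := tsqrt M A
  have hS (i) : mode3 M S i = sqrt (mode3 M A i) := mode3_tsqrt hM hA i
  have hSunit (i) : IsUnit (mode3 M S i) := by
    rw [hS]
    exact (hA.isStrictlyPositive i).isUnit_cfcSqrt
  have hK (i) : mode3 M (tmul3 M (tmul3 M (tinv M S) B) (tinv M S)) i =
      conjSqrt (mode3 M A i)⁻¹ʳ (mode3 M B i) := by
    simp only [mode3_tmul3 hM, mode3_tinv hM hSunit, hS, conjSqrt_apply, sqrt_ringInverse]
  have hKpd : PseudoPD M (tmul3 M (tmul3 M (tinv M S) B) (tinv M S)) :=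
    pseudoPD_iff_isStrictlyPositive.2 fun i => by
      rw [hK, isStrictlyPositive_conjSqrt_iff _ _ (hA.isStrictlyPositive i).ringInverse]
      exact hB.isStrictlyPositive i
  rw [geomean, mode3_tmul3 hM, mode3_tmul3 hM, mode3_tsqrt hM hKpd, hK, hS, geometricMean,
    conjSqrt_apply (c := mode3 M A i)]

end Slices

section TensorGeometricMean

open scoped MatrixOrder

variable {n p : ℕ} {M : Matrix (Fin p) (Fin p) ℂ} {A B C : Fin p → Matrix (Fin n) (Fin n) ℂ}
  (hM : IsUnit M.det)

include hM

theorem PseudoPD.geomean (hA : PseudoPD M A) (hB : PseudoPD M B) : PseudoPD M (geomean M A B) :=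
  pseudoPD_iff_isStrictlyPositive.2 fun i => by
    rw [mode3_geomean hM hA hB]
    exact isStrictlyPositive_geometricMean (hA.isStrictlyPositive i) (hB.isStrictlyPositive i)

theorem geomean_self (hA : PseudoPD M A) : geomean M A A = A :=
  mode3_injective hM <| funext fun i => by
    rw [mode3_geomean hM hA hA, geometricMean_self (hA.isStrictlyPositive i)]

theorem geomean_comm (hA : PseudoPD M A) (hB : PseudoPD M B) : geomean M A B = geomean M B A :=
  mode3_injective hM <| funext fun i => by
    rw [mode3_geomean hM hA hB, mode3_geomean hM hB hA,
      geometricMean_comm (hA.isStrictlyPositive i) (hB.isStrictlyPositive i)]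

theorem tinv_geomean (hA : PseudoPD M A) (hB : PseudoPD M B) :
    tinv M (geomean M A B) = geomean M (tinv M A) (tinv M B) :=
  mode3_injective hM <| funext fun i => by
    rw [mode3_tinv hM (hA.geomean hM hB).isUnit_mode3, mode3_geomean hM hA hB,
      mode3_geomean hM (hA.tinv hM) (hB.tinv hM), mode3_tinv hM hA.isUnit_mode3,
      mode3_tinv hM hB.isUnit_mode3, ringInverse_geometricMean (hA.isStrictlyPositive i)]

theorem mode3_tconjT_conjugate (A C : Fin p → Matrix (Fin n) (Fin n) ℂ) (i : Fin p) :
    mode3 M (tmul3 M (tmul3 M (tconjT M C) A) C) i =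
      star (mode3 M C i) * mode3 M A i * mode3 M C i := by
  rw [mode3_tmul3 hM, mode3_tmul3 hM, mode3_tconjT hM]

theorem PseudoPD.tconjT_conjugate (hA : PseudoPD M A) (hC : ∀ i, IsUnit (mode3 M C i)) :
    PseudoPD M (tmul3 M (tmul3 M (tconjT M C) A) C) :=
  pseudoPD_iff_isStrictlyPositive.2 fun i => by
    rw [mode3_tconjT_conjugate hM, (hC i).isStrictlyPositive_star_left_conjugate_iff]
    exact hA.isStrictlyPositive i

theorem geomean_tconjT_conjugate (hA : PseudoPD M A) (hB : PseudoPD M B)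
    (hC : ∀ i, IsUnit (mode3 M C i)) :
    geomean M (tmul3 M (tmul3 M (tconjT M C) A) C) (tmul3 M (tmul3 M (tconjT M C) B) C) =
      tmul3 M (tmul3 M (tconjT M C) (geomean M A B)) C :=
  mode3_injective hM <| funext fun i => by
    rw [mode3_geomean hM (hA.tconjT_conjugate hM hC) (hB.tconjT_conjugate hM hC)]
    simp only [mode3_tconjT_conjugate hM]
    rw [mode3_geomean hM hA hB, geometricMean_star_conjugate (hA.isStrictlyPositive i)
      (hB.isStrictlyPositive i).nonneg (hC i)]

theorem geomean_smul_smul (hA : PseudoPD M A) (hB : PseudoPD M B) {a b : ℝ} (ha : 0 < a)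
    (hb : 0 < b) :
    geomean M ((a : ℂ) • A) ((b : ℂ) • B) = (√(a * b) : ℂ) • geomean M A B :=
  mode3_injective hM <| funext fun i => by
    rw [mode3_geomean hM (hA.smul ha) (hB.smul hb), mode3_smul, mode3_smul, mode3_smul,
      mode3_geomean hM hA hB]
    simpa only [Complex.coe_smul] using geometricMean_smul_smul (hA.isStrictlyPositive i)
      (hB.isStrictlyPositive i).nonneg ha hb.le

end TensorGeometricMean

/-- properties of the tensor geometric mean for invertible
`M ∈ ℂ^{p×p}` and `*_M`-pseudo-positive-definite `A, B ∈ ℂ^{n×n×p}`: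
(i) idempotence, (ii) inversion order-reversing, (iii) commutativity,
(iv) congruence invariance, (v) joint homogeneity, (vi) consistency with scalars. -/
theorem geomean_properties {n p : ℕ} (M : Matrix (Fin p) (Fin p) ℂ)
    (hM : IsUnit M.det) (A B : Fin p → Matrix (Fin n) (Fin n) ℂ)
    (hA : PseudoPD M A) (hB : PseudoPD M B) :
    geomean M A A = A ∧
    tinv M (geomean M A B) = geomean M (tinv M B) (tinv M A) ∧
    geomean M A B = geomean M B A ∧
    (∀ C : Fin p → Matrix (Fin n) (Fin n) ℂ,
      (∃ X, tmul3 M C X = tId n M ∧ tmul3 M X C = tId n M) →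
        geomean M (tmul3 M (tmul3 M (tconjT M C) A) C)
            (tmul3 M (tmul3 M (tconjT M C) B) C)
          = tmul3 M (tmul3 M (tconjT M C) (geomean M A B)) C) ∧
    (∀ c : ℝ, 0 < c →
      geomean M ((c : ℂ) • A) ((c : ℂ) • B) = (c : ℂ) • geomean M A B) ∧
    (∀ a b : ℝ, 0 < a → 0 < b →
      geomean M ((a : ℂ) • tId n M) ((b : ℂ) • tId n M)
        = ((Real.sqrt (a * b) : ℝ) : ℂ) • tId n M) := by
  have hI := pseudoPD_tId (n := n) hM
  refine ⟨geomean_self hM hA, ?_, geomean_comm hM hA hB, fun C hC => ?_, fun c hc => ?_,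
    fun a b ha hb => ?_⟩
  · rw [geomean_comm hM hA hB, tinv_geomean hM hB hA]
  · exact geomean_tconjT_conjugate hM hA hB ((exists_tmul3_inverse_iff hM).1 hC)
  · rw [geomean_smul_smul hM hA hB hc hc, Real.sqrt_mul_self hc.le]
  · rw [geomean_smul_smul hM hI hI ha hb, geomean_self hM hI]
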